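/- Let n ≥ 2, λ > 0, x ∈ ℝ^n, R > 0, and let f be a smooth real-valued function on an open neighborhood of the closed ball B(x, R) ⊂ ℝ^n satisfying Δf = −λf there. Define the spherical average Av(r) = (1/(nω_n r^{n−1})) ∫_{∂B(x,r)} f dσ for 0 < r < R, where σ is the (n−1)-dimensional surface measure on the sphere ∂B(x,r) and ω_n is the volume of the unit ball in ℝ^n. Then Av extends continuously to r = 0 with Av(0) = f(x), is differentiable on (0, R), and satisfies Av'(r) = −(λ/r^{n−1}) ∫₀^r s^{n−1} Av(s) ds for all 0 < r < R. -/

import Mathlib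

open scoped Real
open MeasureTheory Metric

/-- The Euclidean Laplacian `Δf(x) = Σᵢ ∂²f/∂xᵢ²(x)` of `f : ℝ^d → ℝ`. -/
noncomputable def euclidLaplacian {d : ℕ} (f : EuclideanSpace ℝ (Fin d) → ℝ)
    (x : EuclideanSpace ℝ (Fin d)) : ℝ :=
  ∑ i, fderiv ℝ (fun y => fderiv ℝ f y (EuclideanSpace.single i 1)) x (EuclideanSpace.single i 1)

/-!
Let `n` be the dimension, write `A f` for the mean of `f` over the sphere of radius `r` around `x`,
as a function of `r`, and let `B = r ^ (n - 1) • deriv (A f)`. Green's identity for `f` and a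
compactly supported radial function `φ y = Ψ (‖y - x‖ ^ 2)`, read in polar coordinates, is the weak
form of `deriv B = r ^ (n - 1) • A (Δ f)` on `r > 0` together with `B 0 = 0`. As the test functions
separate continuous functions, `B r = ∫ s in 0..r, s ^ (n - 1) • A (Δ f) s`, and for an
eigenfunction `A (Δ f) = -λ • A f`. Composing `Ψ` with the squared norm makes `φ` differentiable
at `x` too.
-/

section

open Set Filter Module
open scoped Topology Gradient Laplacian Manifold

section PolarCoordinates

variable {E F : Type*} [NormedAddCommGroup E] [NormedSpace ℝ E] [Nontrivial E]
  [FiniteDimensional ℝ E] [MeasurableSpace E] [BorelSpace E]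
  [NormedAddCommGroup F] [NormedSpace ℝ F]

theorem integral_volumeIoiPow (k : ℕ) (g : ℝ → F) :
    ∫ r : Ioi (0 : ℝ), g r ∂(Measure.volumeIoiPow k) = ∫ r in Ioi (0 : ℝ), r ^ k • g r := by
  simp only [Measure.volumeIoiPow, ENNReal.ofReal]
  rw [integral_withDensity_eq_integral_smul (measurable_subtype_coe.pow_const _).real_toNNReal,
    integral_subtype_comap measurableSet_Ioi fun r ↦ Real.toNNReal (r ^ k) • g r]
  refine setIntegral_congr_fun measurableSet_Ioi fun r hr ↦ ?_
  rw [NNReal.smul_def, Real.coe_toNNReal _ (pow_nonneg (mem_Ioi.1 hr).le _)]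

theorem integral_eq_integral_Ioi_integral_toSphere (μ : Measure E) [μ.IsAddHaarMeasure]
    {f : E → F} (hf : Integrable f μ) (x : E) :
    ∫ y, f y ∂μ = ∫ r in Ioi (0 : ℝ), r ^ (finrank ℝ E - 1) •
      ∫ ω : sphere (0 : E) 1, f (x + r • (ω : E)) ∂μ.toSphere := by
  let e := homeomorphUnitSphereProd E
  let g : sphere (0 : E) 1 × Ioi (0 : ℝ) → F := fun p ↦ f (x + (p.2 : ℝ) • (p.1 : E))
  have hmp := μ.measurePreserving_homeomorphUnitSphereProd
  have hge : ∀ y : ({0}ᶜ : Set E), g (e y) = f (x + y) := fun y ↦ by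
    have hy : ‖(y : E)‖ ≠ 0 := norm_ne_zero_iff.2 y.2
    simp [g, e, smul_smul, hy]
  have hg : Integrable g (μ.toSphere.prod (.volumeIoiPow (finrank ℝ E - 1))) := by
    rw [← hmp.integrable_comp_emb (Homeomorph.measurableEmbedding _)]
    refine Integrable.congr ?_ (.of_forall fun y ↦ (hge y).symm)
    exact (integrableOn_iff_comap_subtypeVal (measurableSet_singleton (0 : E)).compl).1
      (hf.comp_add_left x).integrableOn
  calc ∫ y, f y ∂μ
      = ∫ y, f (x + y) ∂μ := (integral_add_left_eq_self f x).symm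
    _ = ∫ y : ({0}ᶜ : Set E), f (x + y) ∂(μ.comap (↑)) := by
        rw [integral_subtype_comap (measurableSet_singleton _).compl fun y ↦ f (x + y),
          restrict_compl_singleton]
    _ = ∫ p, g p ∂μ.toSphere.prod (.volumeIoiPow (finrank ℝ E - 1)) := by
        rw [← hmp.integral_comp (Homeomorph.measurableEmbedding _)]
        exact integral_congr_ae (.of_forall fun y ↦ (hge y).symm)
    _ = ∫ r : Ioi (0 : ℝ), ∫ ω, g (ω, r) ∂μ.toSphere ∂(.volumeIoiPow (finrank ℝ E - 1)) :=
        integral_prod_symm g hg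
    _ = _ := integral_volumeIoiPow _ fun r ↦ ∫ ω, f (x + r • (ω : E)) ∂μ.toSphere

end PolarCoordinates

section Gradient

variable {E : Type*} [NormedAddCommGroup E] [InnerProductSpace ℝ E] [CompleteSpace E]

theorem continuous_gradient {φ : E → ℝ} (hφ : ContDiff ℝ 1 φ) : Continuous (∇ φ) :=
  (InnerProductSpace.toDual ℝ E).symm.continuous.comp (hφ.continuous_fderiv one_ne_zero)

theorem hasCompactSupport_gradient {φ : E → ℝ} (hφ : HasCompactSupport φ) :
    HasCompactSupport (∇ φ) :=
  (hφ.fderiv ℝ).comp_left (map_zero (InnerProductSpace.toDual ℝ E).symm)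

end Gradient

section Laplacian

variable {E F : Type*} [NormedAddCommGroup E] [InnerProductSpace ℝ E] [FiniteDimensional ℝ E]
  [NormedAddCommGroup F] [NormedSpace ℝ F]

theorem laplacian_eq_sum_fderiv_fderiv {ι : Type*} [Fintype ι] (b : OrthonormalBasis ι ℝ E)
    {f : E → F} {x : E} (hf : ContDiffAt ℝ 2 f x) :
    Δ f x = ∑ i, fderiv ℝ (fun y ↦ fderiv ℝ f y (b i)) x (b i) := by
  have hdf : DifferentiableAt ℝ (fderiv ℝ f) x :=
    (hf.fderiv_right (m := 1) (by norm_num)).differentiableAt one_ne_zero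
  simp [InnerProductSpace.laplacian_eq_iteratedFDeriv_orthonormalBasis f b,
    iteratedFDeriv_two_apply, fderiv_clm_apply hdf]

theorem euclidLaplacian_eq_laplacian {d : ℕ} {f : EuclideanSpace ℝ (Fin d) → ℝ}
    {x : EuclideanSpace ℝ (Fin d)} (hf : ContDiffAt ℝ 2 f x) : euclidLaplacian f x = Δ f x := by
  simp [euclidLaplacian, laplacian_eq_sum_fderiv_fderiv (EuclideanSpace.basisFun (Fin d) ℝ) hf]

theorem continuous_laplacian {f : E → F} (hf : ContDiff ℝ 2 f) : Continuous (Δ f) := by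
  rw [InnerProductSpace.laplacian_eq_iteratedFDeriv_stdOrthonormalBasis]
  have := hf.continuous_iteratedFDeriv le_rfl
  fun_prop

theorem sum_fderiv_smul_fderiv_eq_fderiv_gradient {ι : Type*} [Fintype ι]
    (b : OrthonormalBasis ι ℝ E) (φ : E → ℝ) (f : E → F) (y : E) :
    ∑ i, fderiv ℝ φ y (b i) • fderiv ℝ f y (b i) = fderiv ℝ f y (∇ φ y) := by
  conv_rhs => rw [← b.sum_repr' (∇ φ y)]
  simp [inner_gradient_right]

theorem integral_smul_laplacian [MeasurableSpace E] [BorelSpace E] {φ : E → ℝ} {f : E → F}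
    (hφ : ContDiff ℝ 1 φ) (hφc : HasCompactSupport φ) (hf : ContDiff ℝ 2 f) :
    ∫ y, φ y • Δ f y = -∫ y, fderiv ℝ f y (∇ φ y) := by
  let b := stdOrthonormalBasis ℝ E
  have hdf : ∀ i, ContDiff ℝ 1 fun y ↦ fderiv ℝ f y (b i) := fun i ↦
    (hf.fderiv_right (m := 1) (by norm_num)).clm_apply contDiff_const
  have hddf : ∀ i, Continuous fun y ↦ fderiv ℝ (fun z ↦ fderiv ℝ f z (b i)) y (b i) := fun i ↦
    ((hdf i).continuous_fderiv one_ne_zero).clm_apply continuous_const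
  have hdφ : ∀ i, Continuous fun y ↦ fderiv ℝ φ y (b i) := fun i ↦
    (hφ.continuous_fderiv one_ne_zero).clm_apply continuous_const
  have hint₂ : ∀ i, Integrable fun y ↦ φ y • fderiv ℝ (fun z ↦ fderiv ℝ f z (b i)) y (b i) :=
    fun i ↦ (hφ.continuous.smul (hddf i)).integrable_of_hasCompactSupport hφc.smul_right
  have hint₁ : ∀ i, Integrable fun y ↦ fderiv ℝ φ y (b i) • fderiv ℝ f y (b i) := fun i ↦
    ((hdφ i).smul (hdf i).continuous).integrable_of_hasCompactSupport
      (hφc.fderiv_apply ℝ (b i)).smul_right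
  calc ∫ y, φ y • Δ f y
      = ∑ i, ∫ y, φ y • fderiv ℝ (fun z ↦ fderiv ℝ f z (b i)) y (b i) := by
        rw [← integral_finsetSum _ fun i _ ↦ hint₂ i]
        simp only [laplacian_eq_sum_fderiv_fderiv b hf.contDiffAt, Finset.smul_sum]
    _ = ∑ i, -∫ y, fderiv ℝ φ y (b i) • fderiv ℝ f y (b i) :=
        Finset.sum_congr rfl fun i _ ↦ integral_smul_fderiv_eq_neg_fderiv_smul_of_integrable
          (hint₁ i) (hint₂ i)
          ((hφ.continuous.smul (hdf i).continuous).integrable_of_hasCompactSupport hφc.smul_right)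
          (fun y _ ↦ hφ.differentiable one_ne_zero y)
          (fun y _ ↦ (hdf i).differentiable one_ne_zero y)
    _ = -∫ y, fderiv ℝ f y (∇ φ y) := by
        rw [Finset.sum_neg_distrib, ← integral_finsetSum _ fun i _ ↦ hint₁ i]
        simp only [sum_fderiv_smul_fderiv_eq_fderiv_gradient]

end Laplacian

theorem hasDerivAt_integral_of_compactSpace {Y G : Type*} [TopologicalSpace Y] [CompactSpace Y]
    [MeasurableSpace Y] [OpensMeasurableSpace Y] {μ : Measure Y} [IsFiniteMeasure μ]
    [NormedAddCommGroup G] [NormedSpace ℝ G] {K K' : ℝ → Y → G} (hK : ∀ t, Continuous (K t))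
    (hK' : Continuous fun p : ℝ × Y ↦ K' p.1 p.2)
    (hderiv : ∀ t y, HasDerivAt (fun s ↦ K s y) (K' t y) t) (t : ℝ) :
    HasDerivAt (fun s ↦ ∫ y, K s y ∂μ) (∫ y, K' t y ∂μ) t := by
  obtain ⟨C, hC⟩ := ((isCompact_closedBall t 1).prod
    (isCompact_univ (X := Y))).exists_bound_of_continuousOn hK'.continuousOn
  have hint : ∀ {g : Y → G}, Continuous g → Integrable g μ := fun hg ↦
    hg.integrable_of_hasCompactSupport (.of_compactSpace _)
  exact (hasDerivAt_integral_of_dominated_loc_of_deriv_le (bound := fun _ ↦ C)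
    (closedBall_mem_nhds t one_pos) (.of_forall fun s ↦ (hint (hK s)).aestronglyMeasurable)
    (hint (hK t)) (hint (hK'.comp (.prodMk_right t))).aestronglyMeasurable
    (.of_forall fun y s hs ↦ hC (s, y) ⟨hs, trivial⟩) (integrable_const C)
    (.of_forall fun y s _ ↦ hderiv s y)).2

section SphereAverage

variable {E F : Type*} [NormedAddCommGroup E] [InnerProductSpace ℝ E] [FiniteDimensional ℝ E]
  [MeasurableSpace E] [BorelSpace E] [NormedAddCommGroup F] [NormedSpace ℝ F]

/-- The mean value of `f` over the sphere of center `x` and radius `r`. The sphere is parametrized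
by `ω ↦ x + r • ω`, so for nontrivial `E` and complete `F` the value at `r = 0` is `f x`, and
negative radii are allowed. -/
noncomputable def sphereAverage (f : E → F) (x : E) (r : ℝ) : F :=
  ⨍ ω : sphere (0 : E) 1, f (x + r • (ω : E)) ∂(volume : Measure E).toSphere

theorem sphereAverage_zero [Nontrivial E] [CompleteSpace F] (f : E → F) (x : E) :
    sphereAverage f x 0 = f x := by
  have : NeZero (volume : Measure E).toSphere := ⟨Measure.toSphere_ne_zero _⟩
  simp only [sphereAverage, zero_smul, add_zero, average_const]

theorem sphereAverage_smul (c : ℝ) (f : E → F) (x : E) (r : ℝ) :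
    sphereAverage (fun y ↦ c • f y) x r = c • sphereAverage f x r := by
  simp only [sphereAverage, average_eq, integral_smul]
  exact smul_comm _ _ _

theorem sphereAverage_congr {f g : E → F} {x : E} {r : ℝ} (hr : 0 ≤ r)
    (h : EqOn f g (sphere x r)) : sphereAverage f x r = sphereAverage g x r :=
  average_congr (.of_forall fun ω ↦ h (by simp [norm_smul, abs_of_nonneg hr]))

theorem continuousOn_sphereAverage {f : E → F} {x : E} {R : ℝ}
    (hf : ContinuousOn f (closedBall x R)) : ContinuousOn (sphereAverage f x) (Icc 0 R) := by
  refine continuousOn_integral_of_compact_support isCompact_univ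
    (f := fun (r : ℝ) (ω : sphere (0 : E) 1) ↦ f (x + r • (ω : E))) ?_ (by simp)
  refine hf.comp (by fun_prop) ?_
  rintro ⟨r, ω⟩ ⟨hr, -⟩
  simpa [norm_smul, abs_of_nonneg hr.1] using hr.2

theorem continuous_sphereAverage {f : E → F} (hf : Continuous f) (x : E) :
    Continuous (sphereAverage f x) := by
  refine continuousOn_univ.1 <| continuousOn_integral_of_compact_support isCompact_univ
    (f := fun (r : ℝ) (ω : sphere (0 : E) 1) ↦ f (x + r • (ω : E))) ?_ (by simp)
  exact Continuous.continuousOn (by fun_prop)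

theorem hasDerivAt_sphereAverage {f : E → F} (hf : ContDiff ℝ 1 f) (x : E) (r : ℝ) :
    HasDerivAt (sphereAverage f x) (⨍ ω : sphere (0 : E) 1, fderiv ℝ f (x + r • (ω : E)) ω
      ∂(volume : Measure E).toSphere) r := by
  have := hf.continuous_fderiv one_ne_zero
  have := hf.continuous
  refine hasDerivAt_integral_of_compactSpace
    (K := fun r (ω : sphere (0 : E) 1) ↦ f (x + r • (ω : E)))
    (K' := fun r (ω : sphere (0 : E) 1) ↦ fderiv ℝ f (x + r • (ω : E)) ω)
    (fun t ↦ by fun_prop) (by fun_prop) (fun t ω ↦ ?_) r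
  have hline : HasDerivAt (fun s : ℝ ↦ x + s • (ω : E)) ω t := by
    simpa using ((hasDerivAt_id t).smul_const (ω : E)).const_add x
  exact (hf.differentiable one_ne_zero _).hasFDerivAt.comp_hasDerivAt t hline

theorem continuous_deriv_sphereAverage {f : E → F} (hf : ContDiff ℝ 1 f) (x : E) :
    Continuous (deriv (sphereAverage f x)) := by
  have := hf.continuous_fderiv one_ne_zero
  rw [funext fun r ↦ (hasDerivAt_sphereAverage hf x r).deriv]
  refine continuousOn_univ.1 <| continuousOn_integral_of_compact_support isCompact_univ
    (f := fun (r : ℝ) (ω : sphere (0 : E) 1) ↦ fderiv ℝ f (x + r • (ω : E)) ω) ?_ (by simp)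
  exact Continuous.continuousOn (by fun_prop)

theorem smul_deriv_sphereAverage {f : E → F} (hf : ContDiff ℝ 1 f) (x : E) (r : ℝ) :
    r • deriv (sphereAverage f x) r = sphereAverage (fun y ↦ fderiv ℝ f y (y - x)) x r := by
  simp only [(hasDerivAt_sphereAverage hf x r).deriv, sphereAverage, average_eq,
    add_sub_cancel_left, map_smul, integral_smul]
  exact smul_comm _ _ _

theorem sphereAverage_comp_norm_sub_smul (ψ : ℝ → ℝ) (f : E → F) (x : E) {r : ℝ} (hr : 0 ≤ r) :
    sphereAverage (fun y ↦ ψ ‖y - x‖ • f y) x r = ψ r • sphereAverage f x r := by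
  rw [← sphereAverage_smul]
  exact sphereAverage_congr hr fun y hy ↦ by simp only [mem_sphere_iff_norm.1 hy]

theorem toSphere_real_univ_ne_zero [Nontrivial E] :
    (volume : Measure E).toSphere.real univ ≠ 0 := by
  rw [measureReal_ne_zero_iff]
  exact Measure.measure_univ_ne_zero.2 (Measure.toSphere_ne_zero _)

theorem integral_eq_integral_Ioi_sphereAverage [Nontrivial E] {f : E → F} (hf : Integrable f)
    (x : E) : ∫ y, f y = (volume : Measure E).toSphere.real univ •
      ∫ r in Ioi (0 : ℝ), r ^ (finrank ℝ E - 1) • sphereAverage f x r := by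
  rw [integral_eq_integral_Ioi_integral_toSphere volume hf x, ← integral_smul]
  refine integral_congr_ae (.of_forall fun r ↦ ?_)
  simp only [sphereAverage, average_eq]
  rw [smul_comm, smul_inv_smul₀ toSphere_real_univ_ne_zero]

end SphereAverage

section RadialTestFunctions

theorem exists_contDiff_deriv_comp_sq {g : ℝ → ℝ} (hg : Continuous g) (hg₀ : g =ᶠ[atTop] 0) :
    ∃ Ψ : ℝ → ℝ, ContDiff ℝ 1 Ψ ∧ Ψ =ᶠ[atTop] 0 ∧
      ∀ s, 0 ≤ s → deriv (fun t ↦ Ψ (t ^ 2)) s = s * g s := by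
  obtain ⟨c, hc⟩ := eventually_atTop.1 hg₀
  have hgs : Continuous fun v ↦ g √v / 2 := by fun_prop
  let Ψ : ℝ → ℝ := fun u ↦ ∫ v in (c ^ 2)..u, g √v / 2
  have hΨ : ∀ u, HasDerivAt Ψ (g √u / 2) u := fun u ↦
    (hgs.integral_hasStrictDerivAt (c ^ 2) u).hasDerivAt
  refine ⟨Ψ, ?_, ?_, fun s hs ↦ ?_⟩
  · refine contDiff_one_iff_deriv.2 ⟨fun u ↦ (hΨ u).differentiableAt, ?_⟩
    rwa [funext fun u ↦ (hΨ u).deriv]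
  · filter_upwards [eventually_ge_atTop (c ^ 2)] with u hu
    refine intervalIntegral.integral_zero_ae (.of_forall fun v hv ↦ ?_)
    rw [uIoc_of_le hu] at hv
    simp [hc √v (Real.le_sqrt_of_sq_le hv.1.le)]
  · have hchain := (hΨ (s ^ 2)).comp s (hasDerivAt_pow 2 s)
    exact hchain.deriv.trans (by rw [Real.sqrt_sq hs]; ring)

variable {E : Type*} [NormedAddCommGroup E]

theorem hasCompactSupport_comp_norm_sub_sq [ProperSpace E] {G : Type*} [Zero G] {Ψ : ℝ → G}
    (hΨ : Ψ =ᶠ[atTop] 0) (x : E) : HasCompactSupport fun y ↦ Ψ (‖y - x‖ ^ 2) := by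
  rw [hasCompactSupport_iff_eventuallyEq, coclosedCompact_eq_cocompact]
  have hlim : Tendsto (fun y : E ↦ ‖y - x‖ ^ 2) (cocompact E) atTop := by
    refine (tendsto_pow_atTop two_ne_zero).comp ?_
    simpa only [dist_eq_norm] using tendsto_dist_right_cocompact_atTop x
  exact hlim.eventually hΨ

theorem gradient_comp_norm_sub_sq [InnerProductSpace ℝ E] [CompleteSpace E] {Ψ : ℝ → ℝ} {x y : E}
    (hΨ : DifferentiableAt ℝ Ψ (‖y - x‖ ^ 2)) :
    ∇ (fun z ↦ Ψ (‖z - x‖ ^ 2)) y = (2 * deriv Ψ (‖y - x‖ ^ 2)) • (y - x) := by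
  refine HasGradientAt.gradient (hasGradientAt_iff_hasFDerivAt.2 ?_)
  have hsq : HasFDerivAt (fun z ↦ ‖z - x‖ ^ 2) (2 • innerSL ℝ (y - x)) y := by
    simpa using ((hasFDerivAt_id y).sub_const x).norm_sq
  refine (hΨ.hasDerivAt.comp_hasFDerivAt y hsq).congr_fderiv ?_
  ext v
  simp
  ring

end RadialTestFunctions

section FundamentalLemma

variable {F : Type*} [NormedAddCommGroup F] [NormedSpace ℝ F] [CompleteSpace F]

theorem integral_Ioi_deriv_smul_intervalIntegral {ψ : ℝ → ℝ} (hψ : ContDiff ℝ 1 ψ)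
    (hψc : HasCompactSupport ψ) {u : ℝ → F} (hu : Continuous u) (a : ℝ) :
    ∫ s in Ioi a, deriv ψ s • ∫ t in a..s, u t = -∫ s in Ioi a, ψ s • u s := by
  let H : ℝ → F := fun s ↦ ∫ t in a..s, u t
  have hH : ∀ s, HasDerivAt H (u s) s := fun s ↦ (hu.integral_hasStrictDerivAt a s).hasDerivAt
  have hHdiff : ContDiff ℝ 1 H := by
    refine contDiff_one_iff_deriv.2 ⟨fun s ↦ (hH s).differentiableAt, ?_⟩
    rwa [funext fun s ↦ (hH s).deriv]
  have hderiv : ∀ s, deriv (fun s ↦ ψ s • H s) s = ψ s • u s + deriv ψ s • H s := fun s ↦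
    ((hψ.differentiable one_ne_zero s).hasDerivAt.smul (hH s)).deriv
  have htotal : ∫ s in Ioi a, (ψ s • u s + deriv ψ s • H s) = 0 := by
    simp_rw [← hderiv]
    exact (HasCompactSupport.integral_Ioi_deriv_eq (hψ.smul hHdiff) hψc.smul_right a).trans
      (by simp [H])
  have hint₁ : Integrable fun s ↦ ψ s • u s :=
    (hψ.continuous.smul hu).integrable_of_hasCompactSupport hψc.smul_right
  have hint₂ : Integrable fun s ↦ deriv ψ s • H s :=
    ((hψ.continuous_deriv le_rfl).smul hHdiff.continuous).integrable_of_hasCompactSupport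
      hψc.deriv.smul_right
  rw [integral_add hint₁.integrableOn hint₂.integrableOn] at htotal
  exact eq_neg_of_add_eq_zero_right htotal

theorem eqOn_zero_of_integral_contDiff_smul_eq_zero {E : Type*} [NormedAddCommGroup E]
    [NormedSpace ℝ E] [FiniteDimensional ℝ E] [MeasurableSpace E] [BorelSpace E] {μ : Measure E}
    [IsLocallyFiniteMeasure μ] [μ.IsOpenPosMeasure] {U : Set E} (hU : IsOpen U) {w : E → F}
    (hw : ContinuousOn w U)
    (h : ∀ g : E → ℝ, ContDiff ℝ (⊤ : ℕ∞) g → HasCompactSupport g → tsupport g ⊆ U →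
      ∫ y, g y • w y ∂μ = 0) :
    EqOn w 0 U := by
  refine Measure.eqOn_open_of_ae_eq (μ := μ) ?_ hU hw continuousOn_const
  rw [EventuallyEq, ae_restrict_iff' hU.measurableSet]
  exact hU.ae_eq_zero_of_integral_contDiff_smul_eq_zero
    (hw.locallyIntegrableOn hU.measurableSet) h

end FundamentalLemma

section Cutoff

theorem exists_contDiff_eventuallyEq_nhdsSet {E F : Type*} [NormedAddCommGroup E]
    [NormedSpace ℝ E] [FiniteDimensional ℝ E] [NormedAddCommGroup F] [NormedSpace ℝ F] {n : ℕ∞}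
    {K U : Set E} (hK : IsClosed K) (hU : IsOpen U) (hKU : K ⊆ U) {f : E → F}
    (hf : ContDiffOn ℝ n f U) : ∃ g : E → F, ContDiff ℝ n g ∧ g =ᶠ[𝓝ˢ K] f := by
  obtain ⟨χ, hχ₀, hχ₁, -⟩ := exists_contMDiffMap_zero_one_nhds_of_isClosed 𝓘(ℝ, E) (n := n)
    hU.isClosed_compl hK (disjoint_compl_left_iff_subset.2 hKU)
  refine ⟨fun y ↦ χ y • f y, contDiff_iff_contDiffAt.2 fun y ↦ ?_, ?_⟩
  · by_cases hy : y ∈ U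
    · exact χ.contMDiff.contDiff.contDiffAt.smul (hf.contDiffAt (hU.mem_nhds hy))
    · refine contDiffAt_const (c := (0 : F)) |>.congr_of_eventuallyEq ?_
      filter_upwards [eventually_nhdsSet_iff_forall.1 hχ₀ y hy] with z hz
      rw [hz, zero_smul]
  · filter_upwards [hχ₁] with y hy
    rw [hy, one_smul]

end Cutoff

section Darboux

variable {E F : Type*} [NormedAddCommGroup E] [InnerProductSpace ℝ E] [FiniteDimensional ℝ E]
  [Nontrivial E] [MeasurableSpace E] [BorelSpace E]
  [NormedAddCommGroup F] [NormedSpace ℝ F] {f : E → F}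

theorem integral_Ioi_comp_sq_smul_sphereAverage_laplacian {Ψ : ℝ → ℝ} (hΨ : ContDiff ℝ 1 Ψ)
    (hΨ₀ : Ψ =ᶠ[atTop] 0) (hf : ContDiff ℝ 2 f) (x : E) :
    ∫ s in Ioi (0 : ℝ), Ψ (s ^ 2) • s ^ (finrank ℝ E - 1) • sphereAverage (Δ f) x s =
      -∫ s in Ioi (0 : ℝ), deriv (fun t ↦ Ψ (t ^ 2)) s •
        s ^ (finrank ℝ E - 1) • deriv (sphereAverage f x) s := by
  have hf₁ : ContDiff ℝ 1 f := hf.of_le one_le_two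
  let φ : E → ℝ := fun y ↦ Ψ (‖y - x‖ ^ 2)
  have hφ : ContDiff ℝ 1 φ := hΨ.comp ((contDiff_id.sub contDiff_const).norm_sq ℝ)
  have hφc : HasCompactSupport φ := hasCompactSupport_comp_norm_sub_sq hΨ₀ x
  have hgrad : ∀ y, fderiv ℝ f y (∇ φ y) =
      (2 * deriv Ψ (‖y - x‖ ^ 2)) • fderiv ℝ f y (y - x) := fun y ↦ by
    rw [gradient_comp_norm_sub_sq (hΨ.differentiable one_ne_zero _), map_smul]
  have hderiv : ∀ s, deriv (fun t ↦ Ψ (t ^ 2)) s = 2 * deriv Ψ (s ^ 2) * s := fun s ↦ by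
    have hchain := (hΨ.differentiable one_ne_zero (s ^ 2)).hasDerivAt.comp s
      (hasDerivAt_pow 2 s)
    exact hchain.deriv.trans (by ring)
  have hint₁ : Integrable fun y ↦ φ y • Δ f y :=
    (hφ.continuous.smul (continuous_laplacian hf)).integrable_of_hasCompactSupport hφc.smul_right
  have hint₂ : Integrable fun y ↦ fderiv ℝ f y (∇ φ y) := by
    refine ((hf₁.continuous_fderiv one_ne_zero).clm_apply
      (continuous_gradient hφ)).integrable_of_hasCompactSupport ?_
    exact (hasCompactSupport_gradient hφc).mono fun y hy h ↦ hy (by simp [h])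
  have hgreen := integral_smul_laplacian hφ hφc hf
  rw [integral_eq_integral_Ioi_sphereAverage hint₁ x,
    integral_eq_integral_Ioi_sphereAverage hint₂ x, ← smul_neg,
    smul_right_inj toSphere_real_univ_ne_zero] at hgreen
  convert hgreen using 1
  · refine setIntegral_congr_fun measurableSet_Ioi fun s (hs : 0 < s) ↦ ?_
    rw [sphereAverage_comp_norm_sub_smul (fun t ↦ Ψ (t ^ 2)) (Δ f) x hs.le, smul_comm]
  · refine congrArg _ (setIntegral_congr_fun measurableSet_Ioi fun s (hs : 0 < s) ↦ ?_)
    simp only [hgrad]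
    rw [sphereAverage_comp_norm_sub_smul (fun t ↦ 2 * deriv Ψ (t ^ 2)) _ x hs.le,
      ← smul_deriv_sphereAverage hf₁, hderiv, smul_comm, mul_smul, smul_smul, smul_smul]

variable [CompleteSpace F]

theorem integral_Ioi_deriv_comp_sq_smul_sub_eq_zero {Ψ : ℝ → ℝ} (hΨ : ContDiff ℝ 1 Ψ)
    (hΨ₀ : Ψ =ᶠ[atTop] 0) (hf : ContDiff ℝ 2 f) (x : E) :
    ∫ s in Ioi (0 : ℝ), deriv (fun t ↦ Ψ (t ^ 2)) s •
      (s ^ (finrank ℝ E - 1) • deriv (sphereAverage f x) s -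
        ∫ t in (0 : ℝ)..s, t ^ (finrank ℝ E - 1) • sphereAverage (Δ f) x t) = 0 := by
  have hB : Continuous fun s ↦ s ^ (finrank ℝ E - 1) • deriv (sphereAverage f x) s := by
    have := continuous_deriv_sphereAverage (hf.of_le one_le_two) x
    fun_prop
  have hu : Continuous fun s ↦ s ^ (finrank ℝ E - 1) • sphereAverage (Δ f) x s := by
    have := continuous_sphereAverage (continuous_laplacian hf) x
    fun_prop
  have hψ : ContDiff ℝ 1 fun t ↦ Ψ (t ^ 2) := hΨ.comp (contDiff_id.pow 2)
  have hψc : HasCompactSupport fun t ↦ Ψ (t ^ 2) := by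
    simpa using hasCompactSupport_comp_norm_sub_sq hΨ₀ (0 : ℝ)
  have hint : ∀ {v : ℝ → F}, Continuous v →
      IntegrableOn (fun s ↦ deriv (fun t ↦ Ψ (t ^ 2)) s • v s) (Ioi 0) := fun hv ↦
    (((hψ.continuous_deriv le_rfl).smul hv).integrable_of_hasCompactSupport
      hψc.deriv.smul_right).integrableOn
  simp_rw [smul_sub]
  rw [integral_sub (hint hB) (hint (intervalIntegral.continuous_primitive
      (fun a b ↦ hu.intervalIntegrable a b) 0)),
    integral_Ioi_deriv_smul_intervalIntegral hψ hψc hu,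
    integral_Ioi_comp_sq_smul_sphereAverage_laplacian hΨ hΨ₀ hf, neg_neg, sub_self]

theorem pow_smul_deriv_sphereAverage (hf : ContDiff ℝ 2 f) (x : E) {r : ℝ} (hr : 0 < r) :
    r ^ (finrank ℝ E - 1) • deriv (sphereAverage f x) r =
      ∫ s in (0 : ℝ)..r, s ^ (finrank ℝ E - 1) • sphereAverage (Δ f) x s := by
  let w : ℝ → F := fun r ↦ r ^ (finrank ℝ E - 1) • deriv (sphereAverage f x) r -
    ∫ s in (0 : ℝ)..r, s ^ (finrank ℝ E - 1) • sphereAverage (Δ f) x s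
  have hw : Continuous w := by
    have hdAv := continuous_deriv_sphereAverage (hf.of_le one_le_two) x
    have hAv := continuous_sphereAverage (continuous_laplacian hf) x
    exact .sub (by fun_prop) (intervalIntegral.continuous_primitive
      (fun a b ↦ Continuous.intervalIntegrable (by fun_prop) a b) 0)
  -- The factor `s` comes from differentiating `Ψ (s ^ 2)`.
  have hzero : EqOn (fun s ↦ s • w s) 0 (Ioi 0) := by
    refine eqOn_zero_of_integral_contDiff_smul_eq_zero (μ := volume) isOpen_Ioi (by fun_prop)
      fun g hg hgc hgs ↦ ?_
    have hg₀ : g =ᶠ[atTop] 0 := by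
      rw [hasCompactSupport_iff_eventuallyEq, coclosedCompact_eq_cocompact] at hgc
      exact hgc.filter_mono atTop_le_cocompact
    obtain ⟨Ψ, hΨ, hΨ₀, hΨg⟩ := exists_contDiff_deriv_comp_sq hg.continuous hg₀
    have hout : ∀ s ∉ Ioi (0 : ℝ), g s • s • w s = 0 := fun s hs ↦ by
      rw [image_eq_zero_of_notMem_tsupport fun h ↦ hs (hgs h), zero_smul]
    rw [← setIntegral_eq_integral_of_forall_compl_eq_zero hout,
      ← integral_Ioi_deriv_comp_sq_smul_sub_eq_zero hΨ hΨ₀ hf x]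
    refine setIntegral_congr_fun measurableSet_Ioi fun s (hs : 0 < s) ↦ ?_
    rw [hΨg s hs.le, mul_comm, mul_smul]
  exact sub_eq_zero.1 ((smul_eq_zero.1 (hzero hr)).resolve_left hr.ne')

theorem hasDerivAt_sphereAverage_of_contDiffOn {x : E} {r R : ℝ}
    (hf : ContDiffOn ℝ 2 f (ball x R)) (hr : r ∈ Ioo 0 R) :
    HasDerivAt (sphereAverage f x) ((r ^ (finrank ℝ E - 1))⁻¹ •
      ∫ s in (0 : ℝ)..r, s ^ (finrank ℝ E - 1) • sphereAverage (Δ f) x s) r := by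
  obtain ⟨r', hrr', hr'R⟩ := exists_between hr.2
  obtain ⟨g, hg, hgf⟩ := exists_contDiff_eventuallyEq_nhdsSet (n := 2) isClosed_closedBall
    isOpen_ball (closedBall_subset_ball hr'R) hf
  have hsphere : ∀ {s}, s ≤ r' → sphere x s ⊆ closedBall x r' := fun hs ↦
    sphere_subset_closedBall.trans (closedBall_subset_closedBall hs)
  have hAv : sphereAverage f x =ᶠ[𝓝 r] sphereAverage g x := by
    filter_upwards [Ioo_mem_nhds hr.1 hrr'] with s hs
    exact sphereAverage_congr hs.1.le fun y hy ↦
      (hgf.self_of_nhdsSet (hsphere hs.2.le hy)).symm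
  have hΔ : ∀ s ∈ uIcc 0 r, sphereAverage (Δ f) x s = sphereAverage (Δ g) x s := fun s hs ↦ by
    rw [uIcc_of_le hr.1.le] at hs
    refine sphereAverage_congr hs.1 fun y hy ↦ ?_
    exact (InnerProductSpace.laplacian_congr_nhds
      (eventually_nhdsSet_iff_forall.1 hgf y (hsphere (hs.2.trans hrr'.le) hy))).self_of_nhds.symm
  rw [intervalIntegral.integral_congr fun s hs ↦ congrArg _ (hΔ s hs),
    ← pow_smul_deriv_sphereAverage hg x hr.1, inv_smul_smul₀ (pow_pos hr.1 _).ne']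
  exact (hasDerivAt_sphereAverage (hg.of_le one_le_two) x r).differentiableAt.hasDerivAt
    |>.congr_of_eventuallyEq hAv

theorem spherical_average_ode_general (lam : ℝ) {x : E} {R : ℝ}
    (hf : ContDiffOn ℝ 2 f (ball x R)) (hfc : ContinuousOn f (closedBall x R))
    (heig : ∀ y ∈ ball x R, Δ f y = -lam • f y) :
    ContinuousOn (sphereAverage f x) (Icc 0 R) ∧ sphereAverage f x 0 = f x ∧
    ∀ r ∈ Ioo 0 R, HasDerivAt (sphereAverage f x)
      (-(lam / r ^ (finrank ℝ E - 1)) •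
        ∫ s in (0 : ℝ)..r, s ^ (finrank ℝ E - 1) • sphereAverage f x s) r := by
  refine ⟨continuousOn_sphereAverage hfc, sphereAverage_zero f x, fun r hr ↦ ?_⟩
  have hΔ : ∀ s ∈ uIcc 0 r, sphereAverage (Δ f) x s = -lam • sphereAverage f x s := fun s hs ↦ by
    rw [uIcc_of_le hr.1.le] at hs
    rw [← sphereAverage_smul]
    exact sphereAverage_congr hs.1 fun y hy ↦ heig y
      (sphere_subset_closedBall.trans (closedBall_subset_ball (hs.2.trans_lt hr.2)) hy)
  convert hasDerivAt_sphereAverage_of_contDiffOn hf hr using 1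
  rw [intervalIntegral.integral_congr fun s hs ↦ congrArg _ (hΔ s hs)]
  simp_rw [smul_comm _ (-lam)]
  rw [intervalIntegral.integral_smul, smul_smul, mul_neg, div_eq_inv_mul]

end Darboux

end

/-- For an eigenfunction `−Δf = λf` near `B(x,R) ⊂ ℝⁿ`, the spherical average
`Av(r) = ⨍_{∂B(x,r)} f dσ` (realized as the mean of `ω ↦ f(x + r·ω)` over the unit
sphere with its surface measure) extends continuously to `r = 0` with `Av(0) = f(x)`,
is differentiable on `(0,R)`, and satisfies
`Av'(r) = −(λ/r^{n−1}) ∫₀^r s^{n−1} Av(s) ds`. -/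
theorem spherical_average_ode {n : ℕ} (hn : 2 ≤ n) (lam : ℝ) (hlam : 0 < lam)
    (x : EuclideanSpace ℝ (Fin n)) (R : ℝ) (hR : 0 < R)
    (U : Set (EuclideanSpace ℝ (Fin n))) (hU : IsOpen U) (hBU : closedBall x R ⊆ U)
    (f : EuclideanSpace ℝ (Fin n) → ℝ) (hf : ContDiffOn ℝ (⊤ : ℕ∞) f U)
    (heig : ∀ y ∈ U, euclidLaplacian f y = -lam * f y)
    (Av : ℝ → ℝ)
    (hAv : ∀ r : ℝ, Av r =
      ⨍ ω : sphere (0 : EuclideanSpace ℝ (Fin n)) 1,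
        f (x + r • (ω : EuclideanSpace ℝ (Fin n)))
        ∂((volume : Measure (EuclideanSpace ℝ (Fin n))).toSphere)) :
    ContinuousOn Av (Set.Icc 0 R) ∧ Av 0 = f x ∧
    ∀ r ∈ Set.Ioo (0 : ℝ) R,
      HasDerivAt Av (-(lam / r ^ (n - 1)) * ∫ s in (0 : ℝ)..r, s ^ (n - 1) * Av s) r := by
  obtain rfl : Av = sphereAverage f x := funext hAv
  have : NeZero n := ⟨by omega⟩
  have hBU' : ball x R ⊆ U := ball_subset_closedBall.trans hBU
  have hf₂ : ContDiffOn ℝ 2 f U := hf.of_le ENat.LEInfty.out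
  have hode := spherical_average_ode_general lam (hf₂.mono hBU') (hf.continuousOn.mono hBU)
    fun y hy ↦ by
      rw [← euclidLaplacian_eq_laplacian (hf₂.contDiffAt (hU.mem_nhds (hBU' hy))),
        heig y (hBU' hy), smul_eq_mul]
  simpa only [finrank_euclideanSpace_fin, smul_eq_mul] using hode
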